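/- Let Π be a group, C the category of Π-sets, G a finite group with a strict right action on C by equivalences, D' the associated descent category, F : D' → Set the composite forgetful functor, and Π' = Aut(F). If T is a connected object of D' (T is not initial, and whenever T is isomorphic to a coproduct T₁ ⊔ T₂ in D', one of T₁, T₂ is initial), then the tautological action of Π' on F(T) is transitive. -/

import Mathlib

/-!
The regular `M`-set is preserved, up to isomorphism, by every self-equivalence of the category
of `M`-sets (`exists_regular_iso`), since it is nonempty and all its endomorphisms are
invertible. An isomorphism `e : M ≅ g^*M` therefore gives an automorphism of the fibre functor
(`twist`): view a point of the fibre of `(S, ψ)` as a map `s : M → S` and send it to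
`ψ_g⁻¹ ∘ g^*s ∘ e`.

Let `A` be the `Aut F`-orbit of a point `x` of `F(T)`. Since every point of `g^*S` is of the form
`g^*s ∘ e`, invariance of a subset under `M` and under the twists says exactly that it is an
`M`-subset to which the `ψ_g` restrict (`exists_restrict`). Thus both `A` and its complement
underlie descent subobjects, and `T` is their coproduct (`isColimit_sub`). Initial descent
objects have empty fibre (`isEmpty_of_isInitial`), so connectedness of `T` and `x ∈ A` force
the complement of `A` to be empty.
-/


open CategoryTheory CategoryTheory.Limits

universe u

namespace Lepage

variable (M G : Type u) [Group M] [Group G]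

/-- The category of `M`-sets, realized as the category of functors from the
one-object groupoid associated with `M` to the category of sets. -/
abbrev PiSet := SingleObj M ⥤ Type u

variable (act : G → PiSet M ⥤ PiSet M)

/-- Objects of the descent category `D'` associated with a strict right action of `G`
on the category of `Π`-sets: pairs `(S, (ψ_g))` where `ψ_g : S ≅ g^* S` satisfy the
cocycle condition `ψ_{g'g} = g^*(ψ_{g'}) ∘ ψ_g`. -/
structure DescentObj (hmul : ∀ g g' : G, act (g' * g) = act g' ⋙ act g) :
    Type (u + 1) where
  S : PiSet M
  ψ : ∀ g : G, S ⟶ (act g).obj S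
  iso : ∀ g : G, IsIso (ψ g)
  cocycle : ∀ g g' : G, ψ (g' * g) = ψ g ≫ (act g).map (ψ g') ≫
    eqToHom (by rw [hmul g g']; rfl)

variable {M G act}
variable {hmul : ∀ g g' : G, act (g' * g) = act g' ⋙ act g}

/-- Morphisms of the descent category: morphisms `φ : S ⟶ S'` of `Π`-sets commuting
with the descent data. -/
@[ext]
structure DescentHom (T T' : DescentObj M G act hmul) : Type u where
  φ : T.S ⟶ T'.S
  comm : ∀ g : G, φ ≫ T'.ψ g = T.ψ g ≫ (act g).map φ

attribute [simp] DescentHom.comm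

/-- The descent category `D'`. -/
instance : Category (DescentObj M G act hmul) where
  Hom := DescentHom
  id T := ⟨𝟙 T.S, fun g => by simp⟩
  comp f g := ⟨f.φ ≫ g.φ, fun h => by
    rw [Category.assoc, g.comm, ← Category.assoc, f.comm, Category.assoc,
      ← Functor.map_comp]⟩

@[simp] lemma id_φ (T : DescentObj M G act hmul) : DescentHom.φ (𝟙 T) = 𝟙 T.S := rfl

@[simp] lemma comp_φ {T T' T'' : DescentObj M G act hmul} (f : T ⟶ T') (g : T' ⟶ T'') :
    (f ≫ g).φ = f.φ ≫ g.φ := rfl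

variable (M G act hmul)

/-- The forgetful functor `F₀ : D' ⥤ C` from the descent category to the category of
`Π`-sets. -/
def forgetDescent : DescentObj M G act hmul ⥤ PiSet M where
  obj T := T.S
  map f := f.φ

/-- The forgetful functor from the category of `M`-sets to sets, i.e. evaluation at
the unique object. -/
def fiber : PiSet M ⥤ Type u := (evaluation (SingleObj M) (Type u)).obj (SingleObj.star M)

/-- The fundamental functor `F : D' ⥤ Set`, the composite of the two forgetful
functors. -/
def Fib : DescentObj M G act hmul ⥤ Type u := forgetDescent M G act hmul ⋙ fiber M


variable {M G : Type u} [Group M] [Group G] {act : G → PiSet M ⥤ PiSet M}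
variable {hmul : ∀ g g' : G, act (g' * g) = act g' ⋙ act g}

variable (M G act hmul) in
/-- A connected object of a category: it is not initial, and whenever it is
isomorphic to a binary coproduct, one of the two summands is initial. -/
def IsConnectedObj (T : DescentObj M G act hmul) : Prop :=
  (¬ Nonempty (IsInitial T)) ∧
    ∀ (T₁ T₂ : DescentObj M G act hmul) (c : BinaryCofan T₁ T₂),
      Nonempty (IsColimit c) → Nonempty (T ≅ c.pt) →
        Nonempty (IsInitial T₁) ∨ Nonempty (IsInitial T₂)

/-! ### The regular `M`-set and equivalences -/

section Regular

variable (M) in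
/-- The group `M` acting on itself by left translation, as an object of `PiSet M`. It
corepresents the functor `fiber M`. -/
abbrev regular : PiSet M := coyoneda.obj (Opposite.op (SingleObj.star M))

instance isIso_regular_end (f : regular M ⟶ regular M) : IsIso f := by
  obtain ⟨h, rfl⟩ := coyoneda.map_surjective f
  have : IsIso h.unop := inferInstance
  have : IsIso h := (isIso_unop_iff h).mp this
  infer_instance

/-- An equivalence sends the regular `M`-set to a nonempty `M`-set: otherwise its image would
map to the image of the empty `M`-set, and fullness would give an equivariant map `M → ∅`. -/
lemma exists_regular_hom (E : PiSet M ⥤ PiSet M) [E.IsEquivalence] :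
    Nonempty (regular M ⟶ E.obj (regular M)) := by
  by_contra h
  have hempty : IsEmpty ((E.obj (regular M)).obj (SingleObj.star M)) :=
    ⟨fun a => h ⟨coyonedaEquiv.symm a⟩⟩
  let Z : PiSet M := (Functor.const _).obj PEmpty
  let k : E.obj (regular M) ⟶ E.obj Z :=
    { app := fun _ => ↾fun a => (hempty.false a).elim
      naturality := by
        intro _ _ _
        ext a
        exact (hempty.false a).elim }
  exact ((coyonedaEquiv (E.preimage k) : PEmpty)).elim

/-- Equivalences preserve the regular `M`-set up to isomorphism: take maps `a` and `c` in both
directions between `M` and `E(M)`. Both composites are isomorphisms, as endomorphisms of the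
regular `M`-set are invertible and `E` is full. -/
lemma exists_regular_iso (E : PiSet M ⥤ PiSet M) [E.IsEquivalence] :
    Nonempty (regular M ≅ E.obj (regular M)) := by
  obtain ⟨a⟩ := exists_regular_hom E
  obtain ⟨b⟩ := exists_regular_hom E.inv
  let c : E.obj (regular M) ⟶ regular M :=
    E.map b ≫ E.asEquivalence.counitIso.hom.app (regular M)
  have h1 : IsIso (a ≫ c) := inferInstance
  have h2 : IsIso (c ≫ a) := by
    rw [← E.map_preimage (c ≫ a)]
    infer_instance
  have : IsSplitMono a := IsSplitMono.mk' ⟨c ≫ inv (a ≫ c), by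
    rw [← Category.assoc, IsIso.hom_inv_id]⟩
  have : IsSplitEpi a := IsSplitEpi.mk' ⟨inv (c ≫ a) ≫ c, by
    rw [Category.assoc, IsIso.inv_hom_id]⟩
  have : IsIso a := isIso_of_mono_of_isSplitEpi a
  exact ⟨asIso a⟩

end Regular

/-! ### Automorphisms of the fibre functor -/

section Automorphisms

/-- The equivariant map `M → S` classifying a point of the fibre of `T = (S, ψ)`. -/
def hat (T : DescentObj M G act hmul) :
    (Fib M G act hmul).obj T ≃ (regular M ⟶ T.S) :=
  (coyonedaEquiv (X := SingleObj.star M) (F := T.S)).symm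

lemma hat_map {T T' : DescentObj M G act hmul} (f : T ⟶ T') (s : (Fib M G act hmul).obj T) :
    hat T' ((Fib M G act hmul).map f s) = hat T s ≫ f.φ := by
  apply (hat T').symm.injective
  rw [Equiv.symm_apply_apply]
  change f.φ.app _ s = f.φ.app _ ((hat T).symm (hat T s))
  rw [Equiv.symm_apply_apply]

/-- Given an isomorphism `e : M ≅ g^*M`, the bijection of the fibre of `T` with itself sending
`s : M → S` to `ψ_g⁻¹ ∘ g^*s ∘ e`. -/
noncomputable def twistEquiv (g : G) [(act g).IsEquivalence]
    (e : regular M ≅ (act g).obj (regular M)) (T : DescentObj M G act hmul) :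
    (Fib M G act hmul).obj T ≃ (Fib M G act hmul).obj T :=
  have := T.iso g
  (hat T).trans <| (Functor.FullyFaithful.ofFullyFaithful (act g)).homEquiv.trans <|
    (Iso.homCongr e.symm (asIso (T.ψ g)).symm).trans (hat T).symm

lemma hat_twistEquiv (g : G) [(act g).IsEquivalence]
    (e : regular M ≅ (act g).obj (regular M)) (T : DescentObj M G act hmul)
    (s : (Fib M G act hmul).obj T) :
    hat T (twistEquiv g e T s) ≫ T.ψ g = e.hom ≫ (act g).map (hat T s) := by
  have := T.iso g
  simp [twistEquiv, Functor.FullyFaithful.homEquiv]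

/-- The automorphism of the fibre functor given by the bijections `twistEquiv g e`. -/
noncomputable def twist (g : G) [(act g).IsEquivalence]
    (e : regular M ≅ (act g).obj (regular M)) : Aut (Fib M G act hmul) :=
  NatIso.ofComponents (fun T => (twistEquiv g e T).toIso) (by
    intro T T' f
    ext s
    apply (hat T').injective
    have := T'.iso g
    rw [← cancel_mono (T'.ψ g)]
    change hat T' (twistEquiv g e T' ((Fib M G act hmul).map f s)) ≫ _ =
      hat T' ((Fib M G act hmul).map f (twistEquiv g e T s)) ≫ _
    rw [hat_twistEquiv, hat_map, hat_map, Category.assoc, f.comm,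
      ← Category.assoc, hat_twistEquiv, Category.assoc, Functor.map_comp])

lemma hat_twist (g : G) [(act g).IsEquivalence]
    (e : regular M ≅ (act g).obj (regular M)) (T : DescentObj M G act hmul)
    (s : (Fib M G act hmul).obj T) :
    hat T ((twist g e).hom.app T s) ≫ T.ψ g = e.hom ≫ (act g).map (hat T s) :=
  hat_twistEquiv g e T s

variable (act hmul) in
/-- The automorphism of the fibre functor given by the action of `m : M`. -/
def translation (m : SingleObj.star M ⟶ SingleObj.star M) : Aut (Fib M G act hmul) :=
  NatIso.ofComponents (fun T => T.S.mapIso (Groupoid.isoEquivHom _ _ |>.symm m)) (by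
    intro T T' f
    exact (f.φ.naturality m).symm)

end Automorphisms

/-! ### Descent subobjects cut out by stable subsets -/

section Sub

/-- Stability of a subset of the fibre of `T` under all automorphisms of the fibre functor. The
equivalence makes the complement of a stable subset evidently stable. -/
def Stable (T : DescentObj M G act hmul) (A : Set ((Fib M G act hmul).obj T)) : Prop :=
  ∀ (γ : Aut (Fib M G act hmul)) (s : (Fib M G act hmul).obj T), γ.hom.app T s ∈ A ↔ s ∈ A

variable {T : DescentObj M G act hmul} {A : Set ((Fib M G act hmul).obj T)}

/-- A stable subset of the fibre of `T`, as a sub-`M`-set. -/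
def subM (hA : Stable T A) : Subfunctor T.S where
  obj _ := A
  map {_ _} m _ hs := (hA (translation act hmul m) _).mpr hs

lemma hat_factors (hA : Stable T A) {s : (Fib M G act hmul).obj T} (hs : s ∈ A) :
    ∃ t : regular M ⟶ (subM hA).toFunctor, t ≫ (subM hA).ι = hat T s :=
  ⟨(coyonedaEquiv (F := (subM hA).toFunctor) (X := SingleObj.star M)).symm ⟨s, hs⟩, by
    apply coyonedaEquiv.injective
    refine (congrArg ((subM hA).ι.app _) (Equiv.apply_symm_apply coyonedaEquiv _)).trans ?_
    exact ((hat T).symm_apply_apply s).symm⟩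

lemma mem_of_factors (hA : Stable T A) {s : (Fib M G act hmul).obj T}
    (t : regular M ⟶ (subM hA).toFunctor) (ht : t ≫ (subM hA).ι = hat T s) : s ∈ A := by
  have h : s = ((subM hA).ι.app _ (coyonedaEquiv t) : T.S.obj (SingleObj.star M)) := by
    rw [← coyonedaEquiv_comp, ht]
    exact ((hat T).symm_apply_apply s).symm
  rw [h]
  exact (coyonedaEquiv t).2

lemma hom_ext_compl (hA : Stable T A) (hB : Stable T Aᶜ) {X : PiSet M} {f f' : T.S ⟶ X}
    (h₁ : (subM hA).ι ≫ f = (subM hA).ι ≫ f')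
    (h₂ : (subM hB).ι ≫ f = (subM hB).ι ≫ f') : f = f' := by
  ext U s
  by_cases hs : s ∈ A
  · exact ConcreteCategory.congr_hom (NatTrans.congr_app h₁ U) ⟨s, hs⟩
  · exact ConcreteCategory.congr_hom (NatTrans.congr_app h₂ U) ⟨s, hs⟩

lemma exists_desc (hA : Stable T A) (hB : Stable T Aᶜ) {X : PiSet M}
    (f₁ : (subM hA).toFunctor ⟶ X) (f₂ : (subM hB).toFunctor ⟶ X) :
    ∃ f : T.S ⟶ X, (subM hA).ι ≫ f = f₁ ∧ (subM hB).ι ≫ f = f₂ := by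
  classical
  let k : ∀ U, T.S.obj U → X.obj U := fun U s =>
    if hs : s ∈ A then f₁.app U ⟨s, hs⟩ else f₂.app U ⟨s, hs⟩
  have k₁ : ∀ U (s : T.S.obj U) (hs : s ∈ A), k U s = f₁.app U ⟨s, hs⟩ :=
    fun U s hs => dif_pos hs
  have k₂ : ∀ U (s : T.S.obj U) (hs : s ∉ A), k U s = f₂.app U ⟨s, hs⟩ :=
    fun U s hs => dif_neg hs
  refine ⟨{ app := fun U => ↾(k U), naturality := ?_ }, ?_, ?_⟩
  · intro U V m
    ext s
    change k V (T.S.map m s) = X.map m (k U s)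
    by_cases hs : s ∈ A
    · rw [k₁ U s hs, k₁ V _ ((subM hA).map m hs)]
      exact ConcreteCategory.congr_hom (f₁.naturality m) ⟨s, hs⟩
    · rw [k₂ U s hs, k₂ V _ ((subM hB).map m hs)]
      exact ConcreteCategory.congr_hom (f₂.naturality m) ⟨s, hs⟩
  · ext U s
    exact k₁ U s.1 s.2
  · ext U s
    exact k₂ U s.1 s.2

lemma map_eqToHom {E E' : PiSet M ⥤ PiSet M} (h : E = E') {X Y : PiSet M} (f : X ⟶ Y) :
    eqToHom (by rw [h]) ≫ E'.map f = E.map f ≫ eqToHom (by rw [h]) := by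
  subst h
  simp

variable [hequiv : ∀ g : G, (act g).IsEquivalence]

/-- The descent isomorphisms of `T` restrict to a stable subset. Every point of `g^*S` has the
form `g^*(s) ∘ e`, and corresponds under `ψ_g` to the image of `s` under
`twist g e`; by stability that image lies in `A` if and only if `s` does. -/
lemma exists_restrict (hA : Stable T A) (g : G) :
    ∃ θ : (subM hA).toFunctor ≅ (act g).obj (subM hA).toFunctor,
      θ.hom ≫ (act g).map (subM hA).ι = (subM hA).ι ≫ T.ψ g := by
  have := T.iso g
  obtain ⟨e⟩ := exists_regular_iso (act g)
  have hle : Subfunctor.range ((act g).map (subM hA).ι ≫ inv (T.ψ g)) ≤ subM hA := by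
    rintro U _ ⟨w, rfl⟩
    obtain ⟨w', rfl⟩ := (coyonedaEquiv (X := SingleObj.star M)).surjective w
    obtain ⟨t, ht⟩ := (act g).map_surjective (e.inv ≫ w')
    obtain ⟨s, hs⟩ := (hat T).surjective (t ≫ (subM hA).ι)
    have hmem : (twist g e).hom.app T s ∈ A := (hA _ s).mpr (mem_of_factors hA t hs.symm)
    have hw : hat T ((twist g e).hom.app T s) =
        w' ≫ (act g).map (subM hA).ι ≫ inv (T.ψ g) := by
      rw [← cancel_mono (T.ψ g), hat_twist, hs, Functor.map_comp, ht]
      simp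
    have heq := congrArg (hat T).symm hw
    rw [Equiv.symm_apply_apply] at heq
    rw [heq] at hmem
    exact hmem
  let θ := Subfunctor.lift _ hle
  have hθ : θ ≫ (subM hA).ι = (act g).map (subM hA).ι ≫ inv (T.ψ g) := Subfunctor.lift_ι _ hle
  have : Mono θ := mono_of_mono_fac hθ
  have hsurj : ∀ U, Function.Surjective (θ.app U) := by
    rintro U ⟨y, hy⟩
    have hmemA : y ∈ A := hy
    obtain ⟨t, ht⟩ := (act g).map_surjective (e.inv ≫ hat T y ≫ T.ψ g)
    obtain ⟨s, rfl⟩ := (hat T).surjective t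
    have hys : (twist g e).hom.app T s = y := by
      apply (hat T).injective
      rw [← cancel_mono (T.ψ g), hat_twist, ht, Iso.hom_inv_id_assoc]
    rw [← hys] at hmemA
    obtain ⟨r, hr⟩ := hat_factors hA ((hA _ s).mp hmemA)
    refine ⟨coyonedaEquiv (e.hom ≫ (act g).map r), ?_⟩
    have key : (e.hom ≫ (act g).map r) ≫ θ ≫ (subM hA).ι = hat T y := by
      rw [hθ, ← cancel_mono (T.ψ g)]
      simp only [Category.assoc, IsIso.inv_hom_id, Category.comp_id]
      rw [← Functor.map_comp, hr, ht, Iso.hom_inv_id_assoc]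
    apply Subtype.ext
    have h2 := congrArg (hat T).symm key
    exact h2.trans ((hat T).symm_apply_apply y)
  have : Epi θ := by
    have : ∀ U, Epi (θ.app U) := fun U => (epi_iff_surjective _).mpr (hsurj U)
    exact NatTrans.epi_of_epi_app θ
  have : IsIso θ := isIso_of_mono_of_epi θ
  refine ⟨(asIso θ).symm, ?_⟩
  rw [Iso.symm_hom, asIso_inv, IsIso.inv_comp_eq, ← Category.assoc, hθ]
  simp

/-- The restriction of the descent datum of `T` to a stable subset. -/
noncomputable def restrict (hA : Stable T A) (g : G) :
    (subM hA).toFunctor ≅ (act g).obj (subM hA).toFunctor :=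
  (exists_restrict hA g).choose

lemma restrict_comp (hA : Stable T A) (g : G) :
    (restrict hA g).hom ≫ (act g).map (subM hA).ι = (subM hA).ι ≫ T.ψ g :=
  (exists_restrict hA g).choose_spec

/-- The descent subobject of `T` cut out by a stable subset of its fibre. -/
noncomputable def sub (hA : Stable T A) : DescentObj M G act hmul where
  S := (subM hA).toFunctor
  ψ g := (restrict hA g).hom
  iso _ := inferInstance
  cocycle g g' := by
    rw [← cancel_mono ((act (g' * g)).map (subM hA).ι), restrict_comp, T.cocycle]
    have h := map_eqToHom (hmul g g').symm (subM hA).ι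
    simp only [Functor.comp_map] at h
    simp only [Category.assoc]
    erw [h]
    rw [← Category.assoc ((act g).map _), ← Functor.map_comp, restrict_comp, Functor.map_comp,
      ← Category.assoc, ← restrict_comp]
    simp only [Category.assoc]

/-- The inclusion of the descent subobject cut out by a stable subset. -/
noncomputable def incl (hA : Stable T A) : sub hA ⟶ T where
  φ := (subM hA).ι
  comm g := (restrict_comp hA g).symm

/-- An initial descent object has empty fibre, because it maps to the descent subobject of
itself cut out by the empty set. -/
lemma isEmpty_of_isInitial (hT : IsInitial T) : IsEmpty ((Fib M G act hmul).obj T) := by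
  have h : Stable T ∅ := fun _ _ => Iff.rfl
  exact ⟨fun s => ((Fib M G act hmul).map (hT.to (sub h)) s : (∅ : Set _)).2⟩

/-- A descent object is the coproduct of the descent subobjects cut out by a stable subset and
its complement. -/
lemma isColimit_sub (hA : Stable T A) (hB : Stable T Aᶜ) :
    Nonempty (IsColimit (BinaryCofan.mk (incl hA) (incl hB))) := by
  have hdesc : ∀ s : BinaryCofan (sub hA) (sub hB),
      ∃ f : T ⟶ s.pt, incl hA ≫ f = s.inl ∧ incl hB ≫ f = s.inr := by
    intro s
    obtain ⟨f, h₁, h₂⟩ := exists_desc hA hB s.inl.φ s.inr.φ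
    refine ⟨⟨f, fun g => hom_ext_compl hA hB ?_ ?_⟩, DescentHom.ext h₁, DescentHom.ext h₂⟩
    · rw [← Category.assoc, ← Category.assoc, h₁, ← restrict_comp, Category.assoc,
        ← Functor.map_comp, h₁]
      exact s.inl.comm g
    · rw [← Category.assoc, ← Category.assoc, h₂, ← restrict_comp, Category.assoc,
        ← Functor.map_comp, h₂]
      exact s.inr.comm g
  choose desc h₁ h₂ using hdesc
  refine ⟨BinaryCofan.isColimitMk desc h₁ h₂ fun s m e₁ e₂ => DescentHom.ext ?_⟩
  exact hom_ext_compl hA hB (congrArg DescentHom.φ (e₁.trans (h₁ s).symm))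
    (congrArg DescentHom.φ (e₂.trans (h₂ s).symm))

end Sub

/-- STATEMENT 4: if `T` is a connected object of the descent category `D'`, then the
tautological action of `Π' = Aut F` on `F(T)` is transitive. -/
theorem stmt_4 [Finite G] (hone : act 1 = 𝟭 (PiSet M))
    (hequiv : ∀ g : G, (act g).IsEquivalence)
    (T : DescentObj M G act hmul) (hT : IsConnectedObj M G act hmul T) :
    ∀ x y : (Fib M G act hmul).obj T,
      ∃ γ : Aut (Fib M G act hmul), γ.hom.app T x = y := by
  intro x y
  let A : Set ((Fib M G act hmul).obj T) :=
    {z | ∃ γ : Aut (Fib M G act hmul), γ.hom.app T x = z}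
  have hA : Stable T A := by
    intro δ s
    constructor
    · rintro ⟨γ, hγ⟩
      refine ⟨γ ≪≫ δ.symm, ?_⟩
      change δ.inv.app T (γ.hom.app T x) = s
      rw [hγ]
      exact ConcreteCategory.congr_hom (δ.hom_inv_id_app T) s
    · rintro ⟨γ, rfl⟩
      exact ⟨γ ≪≫ δ, rfl⟩
  have hB : Stable T Aᶜ := fun γ s => not_congr (hA γ s)
  obtain ⟨hc⟩ := isColimit_sub hA hB
  rcases hT.2 _ _ _ ⟨hc⟩ ⟨Iso.refl T⟩ with h | h
  · obtain ⟨h⟩ := h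
    exact ((isEmpty_of_isInitial h).false (⟨x, Iso.refl _, rfl⟩ : A)).elim
  · obtain ⟨h⟩ := h
    by_contra hy
    exact (isEmpty_of_isInitial h).false (⟨y, hy⟩ : (Aᶜ : Set _))

end Lepage
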